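/- arXiv:math/0509430 — 2 statements merged into one kernel-verified Lean document; each statement's English description precedes it below -/
import Mathlib

section
/- Lemma 3.1 (generalized Cauchy–Schwarz inequality). Let g ≥ 2 be an integer; for each i = 1,…,g let v_i ≥ 1 and let ℓ_{ij} (j = 1,…,v_i) be nonnegative integers; let X^{(i)} be a real array with entries X^{(i)}_{m_{i1}…m_{iv_i}} indexed by integers m_{ij} with −ℓ_{ij} ≤ m_{ij} ≤ ℓ_{ij}. Let γ̃ be a partition into pairs of the index set T̃ = {(i,j) : 1 ≤ i ≤ g, 1 ≤ j ≤ v_i} with no flat edges, i.e. no pair of γ̃ has both elements in the same row i. Then Σ over all assignments (m_{ij}) satisfying m_{ij} + m_{i′j′} = 0 for every pair {(i,j),(i′,j′)} ∈ γ̃ of the product ∏_{i=1}^{g} |X^{(i)}_{m_{i1}…m_{iv_i}}| is at most ∏_{i=1}^{g} ‖X^{(i)}‖, where ‖X^{(i)}‖ := ( Σ over all admissible (m_{i1},…,m_{iv_i}) of (X^{(i)}_{m_{i1}…m_{iv_i}})² )^{1/2} is the Euclidean norm of the array X^{(i)}. -/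
noncomputable section

/-!
Call two coordinates linked if, on the admissible assignments, the value of either one determines
the value of the other. Sorting the coordinates into classes of linked ones embeds the admissible
assignments into the product, over the classes, of the values that a class can take, and it splits
each row in the same way. The Cauchy–Schwarz inequality to be proved is multiplicative under such
products, so it is enough to prove it for one class. There a row that meets the class determines
the whole class, and since no edge is flat at least two rows meet it: the ordinary Cauchy–Schwarz
inequality applies to these two, and each remaining array is bounded by its norm.
-/

theorem sum_comp_le_sum_of_injective {A B M : Type*} [Fintype A] [Fintype B]
    [AddCommMonoid M] [PartialOrder M] [IsOrderedAddMonoid M] {f : B → M} (hf : ∀ b, 0 ≤ f b)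
    {φ : A → B} (hφ : φ.Injective) : ∑ a, f (φ a) ≤ ∑ b, f b := by
  rw [← Function.Embedding.coeFn_mk φ hφ, ← Finset.sum_map]
  exact Finset.sum_le_sum_of_subset_of_nonneg (Finset.subset_univ _) fun b _ _ => hf b

theorem abs_le_sqrt_sum_sq {B : Type*} [Fintype B] (f : B → ℝ) (b : B) :
    |f b| ≤ √(∑ b, f b ^ 2) :=
  Real.abs_le_sqrt <|
    Finset.single_le_sum (f := fun b => f b ^ 2) (fun _ _ => sq_nonneg _) (Finset.mem_univ b)

/-- The generalized Cauchy–Schwarz inequality for a finite family of maps `p i : A → B i` between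
finite sets: arrays `f i` indexed by the `B i` may be pulled back to `A`, multiplied and summed
at the cost of the product of their Euclidean norms. In the application `A` is the set of
admissible assignments and `p i` is the restriction to the `i`-th row. -/
def CauchySchwarzFamily {ι A : Type*} {B : ι → Type*} [Fintype ι] [Fintype A]
    [∀ i, Fintype (B i)] (p : ∀ i, A → B i) : Prop :=
  ∀ f : ∀ i, B i → ℝ, ∑ a, ∏ i, |f i (p i a)| ≤ ∏ i, √(∑ b, f i b ^ 2)

namespace CauchySchwarzFamily

section Closure

variable {ι A A' : Type*} {B B' : ι → Type*} [Fintype ι] [Fintype A] [Fintype A']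
  [∀ i, Fintype (B i)] [∀ i, Fintype (B' i)] {p : ∀ i, A → B i}

theorem of_two_injective {i j : ι} (hij : i ≠ j) (hi : (p i).Injective) (hj : (p j).Injective) :
    CauchySchwarzFamily p := by
  classical
  intro f
  have prod_eq (h : ι → ℝ) : ∏ k, h k = h i * h j * ∏ k ∈ (Finset.univ.erase i).erase j, h k := by
    rw [mul_assoc, Finset.mul_prod_erase _ _ (by simp [hij.symm]),
      Finset.mul_prod_erase _ _ (Finset.mem_univ i)]
  have norm_pullback_le {k : ι} (hk : (p k).Injective) :
      √(∑ a, |f k (p k a)| ^ 2) ≤ √(∑ b, f k b ^ 2) := by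
    simp only [sq_abs]
    exact Real.sqrt_le_sqrt <|
      sum_comp_le_sum_of_injective (f := fun b => f k b ^ 2) (fun _ => sq_nonneg _) hk
  have two_rows : ∑ a, |f i (p i a)| * |f j (p j a)| ≤
      √(∑ b, f i b ^ 2) * √(∑ b, f j b ^ 2) :=
    (Real.sum_mul_le_sqrt_mul_sqrt _ _ _).trans <|
      mul_le_mul (norm_pullback_le hi) (norm_pullback_le hj) (Real.sqrt_nonneg _)
        (Real.sqrt_nonneg _)
  simp only [prod_eq]
  calc ∑ a, |f i (p i a)| * |f j (p j a)| *
        ∏ k ∈ (Finset.univ.erase i).erase j, |f k (p k a)|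
    _ ≤ ∑ a, |f i (p i a)| * |f j (p j a)| *
        ∏ k ∈ (Finset.univ.erase i).erase j, √(∑ b, f k b ^ 2) := by
      gcongr
      exact abs_le_sqrt_sum_sq _ _
    _ ≤ _ := by
      rw [← Finset.sum_mul]
      gcongr

theorem comp_injective (hp : CauchySchwarzFamily p) {φ : A' → A} (hφ : φ.Injective)
    {ψ : ∀ i, B i → B' i} (hψ : ∀ i, (ψ i).Injective) :
    CauchySchwarzFamily fun i => ψ i ∘ p i ∘ φ := fun f =>
  calc ∑ a, ∏ i, |f i (ψ i (p i (φ a)))|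
    _ ≤ ∑ a, ∏ i, |f i (ψ i (p i a))| :=
      sum_comp_le_sum_of_injective (f := fun a => ∏ i, |f i (ψ i (p i a))|)
        (fun _ => by positivity) hφ
    _ ≤ ∏ i, √(∑ b, f i (ψ i b) ^ 2) := hp fun i b => f i (ψ i b)
    _ ≤ ∏ i, √(∑ b, f i b ^ 2) := by
      gcongr with i
      exact sum_comp_le_sum_of_injective (f := fun b => f i b ^ 2) (fun _ => sq_nonneg _) (hψ i)

theorem prodMap {p' : ∀ i, A' → B' i} (hp : CauchySchwarzFamily p)
    (hp' : CauchySchwarzFamily p') : CauchySchwarzFamily fun i => Prod.map (p i) (p' i) := by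
  intro f
  calc ∑ a, ∏ i, |f i (Prod.map (p i) (p' i) a)|
    _ = ∑ a, ∑ a', ∏ i, |f i (p i a, p' i a')| := by
      rw [Fintype.sum_prod_type]
      rfl
    _ ≤ ∑ a, ∏ i, √(∑ b', f i (p i a, b') ^ 2) := by
      gcongr with a
      exact hp' fun i b' => f i (p i a, b')
    _ = ∑ a, ∏ i, |√(∑ b', f i (p i a, b') ^ 2)| := by
      simp only [abs_of_nonneg (Real.sqrt_nonneg _)]
    _ ≤ ∏ i, √(∑ b, √(∑ b', f i (b, b') ^ 2) ^ 2) := hp fun i b => √(∑ b', f i (b, b') ^ 2)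
    _ = ∏ i, √(∑ b, f i b ^ 2) := by
      have sq_sqrt (i : ι) (b : B i) : √(∑ b', f i (b, b') ^ 2) ^ 2 = ∑ b', f i (b, b') ^ 2 :=
        Real.sq_sqrt (by positivity)
      simp only [sq_sqrt, Fintype.sum_prod_type]

end Closure

section Pi

variable {ι : Type*} [Fintype ι]

theorem piMap_fin {n : ℕ} {A : Fin n → Type*} {B : Fin n → ι → Type*} [∀ k, Fintype (A k)]
    [∀ k i, Fintype (B k i)] {p : ∀ k i, A k → B k i} (hp : ∀ k, CauchySchwarzFamily (p k)) :
    CauchySchwarzFamily fun i => Pi.map fun k => p k i := by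
  induction n with
  | zero =>
    intro f
    simp [Real.sqrt_sq_eq_abs, Subsingleton.elim _ (default : ∀ k, B k _)]
  | succ n ih =>
    convert ((hp 0).prodMap (ih fun k => hp k.succ)).comp_injective
      (Fin.consEquiv A).symm.injective
      (ψ := fun i => Fin.consEquiv fun k => B k i) (fun i => Equiv.injective _) using 1
    funext i a k
    cases k using Fin.cases <;> rfl

theorem piMap {κ : Type*} [Fintype κ] [DecidableEq κ] {A : κ → Type*} {B : κ → ι → Type*}
    [∀ k, Fintype (A k)] [∀ k i, Fintype (B k i)] {p : ∀ k i, A k → B k i}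
    (hp : ∀ k, CauchySchwarzFamily (p k)) :
    CauchySchwarzFamily fun i => Pi.map fun k => p k i := by
  let e := (Fintype.equivFin κ).symm
  convert (piMap_fin fun n => hp (e n)).comp_injective (Equiv.piCongrLeft A e).symm.injective
    (ψ := fun i => Equiv.piCongrLeft (fun k => B k i) e) (fun i => Equiv.injective _) using 1
  funext i a k
  obtain ⟨n, rfl⟩ := e.surjective k
  simp [Equiv.piCongrLeft_apply_apply]

end Pi

theorem of_linked {ι A : Type*} {J : ι → Type*} {α : ∀ i, J i → Type*} [Fintype ι] [Fintype A]
    [∀ i, Fintype (J i)] [∀ i, DecidableEq (J i)] [∀ i j, Fintype (α i j)]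
    {m : ∀ i, A → ∀ j, α i j} (hm : Function.Injective fun a i => m i a)
    (linked : ∀ i j, ∃ i' ≠ i, ∃ j',
      Setoid.ker (fun a => m i' a j') = Setoid.ker (fun a => m i a j)) :
    CauchySchwarzFamily m := by
  classical
  -- A class of linked coordinates is encoded by the common kernel `k` of its members, so that
  -- `Quotient k` is the set of values that the class can take.
  let link (x : Σ i, J i) : Setoid A := Setoid.ker fun a => m x.1 a x.2
  let row (k : Set.range link) (i : ι) :
      Quotient k.1 → ∀ j : {j // link ⟨i, j⟩ = k.1}, α i j :=
    fun q j => q.lift (fun a => m i a j) fun a a' (h : k.1 a a') => by rwa [← j.2] at h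
  have row_injective (k : Set.range link) {i : ι} {j : J i} (hj : link ⟨i, j⟩ = k.1) :
      (row k i).Injective := by
    rintro ⟨a⟩ ⟨a'⟩ h
    refine Quotient.sound ?_
    change k.1 a a'
    rw [← hj]
    exact congrFun h ⟨j, hj⟩
  have class_bound (k : Set.range link) : CauchySchwarzFamily (row k) := by
    obtain ⟨_, ⟨i, j⟩, hj⟩ := k
    obtain ⟨i', hi', j', hj'⟩ := linked i j
    exact of_two_injective hi' (row_injective _ (hj'.trans hj)) (row_injective _ hj)
  refine (piMap class_bound).comp_injective
    (φ := fun a k => ⟦a⟧)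
    (ψ := fun i b j => b ⟨link ⟨i, j⟩, Set.mem_range_self _⟩ ⟨j, rfl⟩) ?_ ?_
  · intro a a' h
    refine hm (funext fun i => funext fun j => ?_)
    exact Quotient.exact (congrFun h ⟨link ⟨i, j⟩, Set.mem_range_self _⟩)
  · intro i b b' h
    funext ⟨k, hk⟩ ⟨j, hj⟩
    obtain rfl : link ⟨i, j⟩ = k := hj
    exact congrFun h j

end CauchySchwarzFamily

theorem sum_prod_abs_le_of_linked {ι : Type*} {J : ι → Type*} {α : ∀ i, J i → Type*} [Fintype ι]
    [∀ i, Fintype (J i)] [∀ i, DecidableEq (J i)] (S : Finset (∀ i j, α i j))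
    (R : ∀ i j, Finset (α i j)) (X : ∀ i, (∀ j, α i j) → ℝ)
    (mem_box : ∀ m ∈ S, ∀ i j, m i j ∈ R i j)
    (linked : ∀ i j, ∃ i' ≠ i, ∃ j', ∀ m ∈ S, ∀ m' ∈ S,
      m i' j' = m' i' j' ↔ m i j = m' i j) :
    ∑ m ∈ S, ∏ i, |X i (m i)| ≤ ∏ i, √(∑ b ∈ Fintype.piFinset (R i), X i b ^ 2) := by
  have rows_cauchySchwarz : CauchySchwarzFamily
      fun i (m : S) j => (⟨m.1 i j, mem_box m m.2 i j⟩ : R i j) := by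
    refine .of_linked (fun m m' h => ?_) fun i j => ?_
    · ext i j
      exact congrArg Subtype.val (congrFun (congrFun h i) j)
    · obtain ⟨i', hi', j', h⟩ := linked i j
      refine ⟨i', hi', j', ?_⟩
      ext m m'
      simpa [Setoid.ker_def] using h m m.2 m' m'.2
  have toBox_injective (i : ι) : Function.Injective fun b : ∀ j, R i j =>
      (⟨fun j => b j, Fintype.mem_piFinset.2 fun j => (b j).2⟩ : Fintype.piFinset (R i)) :=
    fun b b' h => funext fun j => Subtype.ext (congrFun (congrArg Subtype.val h) j)
  rw [← Finset.sum_coe_sort]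
  simp only [← Finset.sum_coe_sort (Fintype.piFinset _)]
  exact rows_cauchySchwarz.comp_injective Function.injective_id toBox_injective fun i b => X i b

theorem lemma_3_1_general {ι G : Type*} {J : ι → Type*} [Fintype ι] [DecidableEq ι]
    [∀ i, Fintype (J i)] [∀ i, DecidableEq (J i)] [AddCancelMonoid G] [DecidableEq G]
    (R : ∀ i, J i → Finset G) (X : ∀ i, (J i → G) → ℝ) (π : (Σ i, J i) → Σ i, J i)
    (hflat : ∀ x, (π x).1 ≠ x.1) :
    (∑ m ∈ Fintype.piFinset fun i => Fintype.piFinset (R i),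
      if ∀ x : Σ i, J i, m x.1 x.2 + m (π x).1 (π x).2 = 0 then ∏ i, |X i (m i)| else 0) ≤
      ∏ i, √(∑ mi ∈ Fintype.piFinset (R i), X i mi ^ 2) := by
  rw [← Finset.sum_filter]
  refine sum_prod_abs_le_of_linked _ R X (fun m hm i j => ?_) fun i j =>
    ⟨(π ⟨i, j⟩).1, hflat ⟨i, j⟩, (π ⟨i, j⟩).2, fun m hm m' hm' => ?_⟩
  · exact Fintype.mem_piFinset.1 (Fintype.mem_piFinset.1 (Finset.mem_filter.1 hm).1 i) j
  · have edge_sums_eq : m i j + m (π ⟨i, j⟩).1 (π ⟨i, j⟩).2 =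
        m' i j + m' (π ⟨i, j⟩).1 (π ⟨i, j⟩).2 :=
      ((Finset.mem_filter.1 hm).2 ⟨i, j⟩).trans ((Finset.mem_filter.1 hm').2 ⟨i, j⟩).symm
    constructor <;> intro h <;> rw [h] at edge_sums_eq
    exacts [add_right_cancel edge_sums_eq, add_left_cancel edge_sums_eq]

/-- **Lemma 3.1** (generalized Cauchy–Schwarz inequality). Let `X^{(1)}, …, X^{(g)}` be real
arrays, the array `X^{(i)}` having `v i` integer index slots, the `j`-th slot ranging over
`[-ℓ i j, ℓ i j]`. Let `γ̃` be a partition into pairs of the index set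
`T̃ = {(i,j) : i < g, j < v i}` with no flat edges, encoded as a fixed-point-free involution
`π` with `(π x).1 ≠ x.1` for every `x`. Then the sum, over all admissible assignments `m`
with `m x + m (π x) = 0` for every `x`, of `∏ᵢ |X^{(i)}(m i ·)|`, is at most the product of
the Euclidean norms of the arrays. -/
theorem lemma_3_1 (g : ℕ) (hg : 2 ≤ g) (v : Fin g → ℕ) (hv : ∀ i, 1 ≤ v i)
    (ℓ : (i : Fin g) → Fin (v i) → ℕ)
    (X : (i : Fin g) → ((j : Fin (v i)) → ℤ) → ℝ)
    (π : ((i : Fin g) × Fin (v i)) → ((i : Fin g) × Fin (v i)))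
    (hinv : Function.Involutive π)
    (hflat : ∀ x, (π x).1 ≠ x.1) :
    (∑ m ∈ Fintype.piFinset (fun i : Fin g =>
        Fintype.piFinset (fun j : Fin (v i) => Finset.Icc (-(ℓ i j : ℤ)) (ℓ i j))),
      if ∀ x : (i : Fin g) × Fin (v i), m x.1 x.2 + m (π x).1 (π x).2 = 0 then
        ∏ i, |X i (m i)|
      else 0) ≤
      ∏ i, Real.sqrt (∑ mi ∈ Fintype.piFinset
        (fun j : Fin (v i) => Finset.Icc (-(ℓ i j : ℤ)) (ℓ i j)), (X i mi) ^ 2) := by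
  exact lemma_3_1_general (fun i j => Finset.Icc (-(ℓ i j : ℤ)) (ℓ i j)) X π hflat

end
end

section
/- Lemma 3.3 (moments with estimated normalization at a single multipole). Let l ≥ 1, let 0 ≤ k ≤ l, and let q₀, q₁, q₁′, …, q_k, q_k′ be nonnegative integers with total degree n := q₀ + Σ_{j=1}^{k}(q_j + q_j′) even. Then E[ û_{l0}^{q₀} · ∏_{j=1}^{k} û_{lj}^{q_j} (conj(û_{lj}))^{q_j′} ] = g(l; n/2) · E[ u_{l0}^{q₀} · ∏_{j=1}^{k} u_{lj}^{q_j} (conj(u_{lj}))^{q_j′} ], where g(l;p) := ∏_{k=1}^{p} (2l+1)/(2l+2k−1). -/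
open MeasureTheory ProbabilityTheory

noncomputable section


/-- Factorial of an integer (the factorial of its nonnegative part). -/
def zfact (z : ℤ) : ℕ := Nat.factorial z.toNat

/-- The range `-l, ..., l` of projection quantum numbers for multipole `l`. -/
def mrange (l : ℕ) : Finset ℤ := Finset.Icc (-(l : ℤ)) l

/-- The Wigner 3j symbol, defined by the Racah factorial sum formula; it vanishes
unless `m₁ + m₂ + m₃ = 0`, `|mᵢ| ≤ lᵢ` and the triangle conditions hold. -/
def w3j (l₁ l₂ l₃ : ℕ) (m₁ m₂ m₃ : ℤ) : ℝ :=
  if m₁ + m₂ + m₃ = 0 ∧ m₁.natAbs ≤ l₁ ∧ m₂.natAbs ≤ l₂ ∧ m₃.natAbs ≤ l₃ ∧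
      l₃ ≤ l₁ + l₂ ∧ l₁ ≤ l₂ + l₃ ∧ l₂ ≤ l₁ + l₃ then
    (-1 : ℝ) ^ ((l₃ : ℤ) + m₃ + l₂ + m₂) *
    Real.sqrt (((zfact ((l₁ : ℤ) + l₂ - l₃) * zfact ((l₁ : ℤ) - l₂ + l₃) *
        zfact (-(l₁ : ℤ) + l₂ + l₃) : ℕ) : ℝ) / ((zfact ((l₁ : ℤ) + l₂ + l₃ + 1) : ℕ) : ℝ)) *
    Real.sqrt (((zfact ((l₃ : ℤ) + m₃) * zfact ((l₃ : ℤ) - m₃) : ℕ) : ℝ) /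
      ((zfact ((l₁ : ℤ) + m₁) * zfact ((l₁ : ℤ) - m₁) * zfact ((l₂ : ℤ) + m₂) *
        zfact ((l₂ : ℤ) - m₂) : ℕ) : ℝ)) *
    ∑ z ∈ Finset.range (l₁ + l₂ + l₃ + 1),
      if (l₂ : ℤ) + l₃ + m₁ - z ≥ 0 ∧ (l₁ : ℤ) - m₁ + z ≥ 0 ∧ (l₂ : ℤ) + l₃ - l₁ - z ≥ 0 ∧
          (l₃ : ℤ) + m₃ - z ≥ 0 ∧ (l₁ : ℤ) - l₂ - m₃ + z ≥ 0 then
        (-1 : ℝ) ^ z * ((zfact ((l₂ : ℤ) + l₃ + m₁ - z) * zfact ((l₁ : ℤ) - m₁ + z) : ℕ) : ℝ) /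
          ((Nat.factorial z * zfact ((l₂ : ℤ) + l₃ - l₁ - z) * zfact ((l₃ : ℤ) + m₃ - z) *
            zfact ((l₁ : ℤ) - l₂ - m₃ + z) : ℕ) : ℝ)
      else 0
  else 0

/-- Index set for the independent real Gaussian coordinates of the random spherical harmonic
coefficients: a triple `(l, m, b)` with `1 ≤ l`, `0 ≤ m ≤ l`, where `b` distinguishes real and
imaginary parts (only the real part is used when `m = 0`). -/
def GaussIx : Type := {q : ℕ × ℕ × Bool // 1 ≤ q.1 ∧ q.2.1 ≤ q.1 ∧ (q.2.1 = 0 → q.2.2 = false)}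

/-- The real Gaussian coordinate associated to an index. -/
def coordFn {Ω : Type*} (a : ℕ → ℤ → Ω → ℂ) (i : GaussIx) (ω : Ω) : ℝ :=
  if i.1.2.2 then (a i.1.1 (i.1.2.1 : ℤ) ω).im else (a i.1.1 (i.1.2.1 : ℤ) ω).re

/-- The variance of the Gaussian coordinate associated to an index:
`C l` for `a_{l0}`, and `C l / 2` for real and imaginary parts when `m ≠ 0`. -/
def coordVar (C : ℕ → ℝ) (i : GaussIx) : NNReal :=
  if i.1.2.1 = 0 then (C i.1.1).toNNReal else (C i.1.1 / 2).toNNReal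

/-- The Gaussian isotropic model for the random spherical harmonic coefficients `a_{lm}`,
with angular power spectrum `C`. -/
structure CMBModel {Ω : Type*} [MeasurableSpace Ω] (μ : Measure Ω) (C : ℕ → ℝ)
    (a : ℕ → ℤ → Ω → ℂ) : Prop where
  cPos : ∀ l, 1 ≤ l → 0 < C l
  aZeroReal : ∀ l, 1 ≤ l → ∀ ω, (a l 0 ω).im = 0
  aConj : ∀ l, 1 ≤ l → ∀ m : ℕ, 1 ≤ m → m ≤ l → ∀ ω,
    a l (-(m : ℤ)) ω = (-1 : ℂ) ^ m * (starRingEnd ℂ) (a l (m : ℤ) ω)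
  indep : iIndepFun (coordFn a) μ
  gauss : ∀ i : GaussIx, Measure.map (coordFn a i) μ = gaussianReal 0 (coordVar C i)

/-- The sample angle-averaged bispectrum. -/
def Bhat {Ω : Type*} (a : ℕ → ℤ → Ω → ℂ) (l₁ l₂ l₃ : ℕ) (ω : Ω) : ℂ :=
  ∑ m₁ ∈ mrange l₁, ∑ m₂ ∈ mrange l₂, ∑ m₃ ∈ mrange l₃,
    ((w3j l₁ l₂ l₃ m₁ m₂ m₃ : ℝ) : ℂ) * a l₁ m₁ ω * a l₂ m₂ ω * a l₃ m₃ ω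

/-- The normalized bispectrum (known angular power spectrum). -/
def Ibis {Ω : Type*} (C : ℕ → ℝ) (a : ℕ → ℤ → Ω → ℂ) (l₁ l₂ l₃ : ℕ) (ω : Ω) : ℝ :=
  (-1 : ℝ) ^ ((l₁ + l₂ + l₃) / 2) * (Bhat a l₁ l₂ l₃ ω).re /
    Real.sqrt (C l₁ * C l₂ * C l₃)

/-- The sample estimator of the angular power spectrum. -/
def Chat {Ω : Type*} (a : ℕ → ℤ → Ω → ℂ) (l : ℕ) (ω : Ω) : ℝ :=
  (2 * (l : ℝ) + 1)⁻¹ * ∑ m ∈ mrange l, Complex.normSq (a l m ω)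

/-- The feasible normalized bispectrum (estimated angular power spectrum). -/
def Ihat {Ω : Type*} (a : ℕ → ℤ → Ω → ℂ) (l₁ l₂ l₃ : ℕ) (ω : Ω) : ℝ :=
  (-1 : ℝ) ^ ((l₁ + l₂ + l₃) / 2) * (Bhat a l₁ l₂ l₃ ω).re /
    Real.sqrt (Chat a l₁ ω * Chat a l₂ ω * Chat a l₃ ω)

/-- The combinatorial factor `Δ_{l₁l₂l₃}` (for `l₁ ≤ l₂ ≤ l₃`). -/
def Delta (l₁ l₂ l₃ : ℕ) : ℝ :=
  if l₁ < l₂ ∧ l₂ < l₃ then 1 else if l₁ = l₂ ∧ l₂ = l₃ then 6 else 2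
/-- The correction factor `g(l;p) = ∏_{k=1}^p (2l+1)/(2l+2k-1)`. -/
def gfun (l p : ℕ) : ℝ := ∏ k ∈ Finset.Icc 1 p, (2 * (l : ℝ) + 1) / (2 * l + 2 * k - 1)

/-- The multiset `{l₁, l₂, l₃}` of the components of a triple. -/
def tripleMultiset (l : ℕ × ℕ × ℕ) : Multiset ℕ := {l.1, l.2.1, l.2.2}

/-- The correction factor `G[(l_{11},l_{12},l_{13}),…,(l_{I1},l_{I2},l_{I3}); p₁,…,p_I]`:
repeat each triple `2pᵢ` times, and take `∏_u g(ℓ̄_u ; #(u)/2)` over the distinct values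
`ℓ̄_u`, where `#(u)` is the multiplicity of `ℓ̄_u`. -/
def Gfactor {I : ℕ} (l : Fin I → ℕ × ℕ × ℕ) (p : Fin I → ℕ) : ℝ :=
  let M : Multiset ℕ := ∑ i : Fin I, (2 * p i) • tripleMultiset (l i)
  ∏ u ∈ M.toFinset, gfun u (M.count u / 2)

/-- The normalized coefficient `u_{lm} = a_{lm}/√C_l`. -/
def ufun {Ω : Type*} (C : ℕ → ℝ) (a : ℕ → ℤ → Ω → ℂ) (l : ℕ) (m : ℤ) (ω : Ω) : ℂ :=
  a l m ω / ((Real.sqrt (C l) : ℝ) : ℂ)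

/-- The feasibly normalized coefficient `û_{lm} = a_{lm}/√Ĉ_l`. -/
def uhat {Ω : Type*} (a : ℕ → ℤ → Ω → ℂ) (l : ℕ) (m : ℤ) (ω : Ω) : ℂ :=
  a l m ω / ((Real.sqrt (Chat a l ω) : ℝ) : ℂ)

/-!
The standardized real and imaginary parts of the coefficients at multipole `l` form a standard
Gaussian vector `X` in `ℝ^(2l+1)`. Each `u_{lm}` is a linear function of `X`, and
`Ĉ_l / C_l = ‖X‖² / (2l+1)`, so `û_{lm}` is the same linear function of `√(2l+1) • X / ‖X‖`. By
rotation invariance the norm and the direction of `X` are independent. Hence, for a polynomial `P`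
homogeneous of degree `2p`, both `E[P(X)]` and `E[P(√(2l+1) • X / ‖X‖)]` are multiples of
`E[P(X / ‖X‖)]`, with factors `E‖X‖^(2p) = (2l+1)(2l+3)⋯(2l+2p-1)` and `(2l+1)^p`, whose
quotient is `g(l;p)`.
-/

section SphericalSymmetry

variable {E F : Type*} [NormedAddCommGroup E] [NormedSpace ℝ E] [FiniteDimensional ℝ E]
  [Nontrivial E] [MeasurableSpace E] [BorelSpace E] [NormedAddCommGroup F] [NormedSpace ℝ F]

lemma integral_fun_norm_smul_addHaar (μ : Measure E) [μ.IsAddHaarMeasure] (f : ℝ → ℝ) {G : E → F}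
    (hG : ∀ r : ℝ, 0 < r → ∀ x, G (r • x) = G x) :
    ∫ x, f ‖x‖ • G x ∂μ =
      (∫ y : Set.Ioi (0 : ℝ), f y ∂.volumeIoiPow (Module.finrank ℝ E - 1)) •
        ∫ s : Metric.sphere (0 : E) 1, G s ∂μ.toSphere :=
  calc
    ∫ x, f ‖x‖ • G x ∂μ = ∫ x : ({0}ᶜ : Set E), f ‖x.1‖ • G x.1 ∂(μ.comap (↑)) := by
      rw [integral_subtype_comap (measurableSet_singleton _).compl fun x ↦ f ‖x‖ • G x,
        restrict_compl_singleton]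
    _ = ∫ z, f z.2 • G z.1 ∂μ.toSphere.prod (.volumeIoiPow (Module.finrank ℝ E - 1)) := by
      rw [← μ.measurePreserving_homeomorphUnitSphereProd.integral_comp
        (Homeomorph.measurableEmbedding _)]
      refine integral_congr_ae (.of_forall fun x ↦ ?_)
      simp [hG _ (inv_pos.2 (norm_pos_iff.2 x.2))]
    _ = ∫ z, f z.1 • G z.2 ∂(Measure.volumeIoiPow (Module.finrank ℝ E - 1)).prod μ.toSphere :=
      (integral_prod_swap _).symm
    _ = _ := integral_prod_smul (fun y : Set.Ioi (0 : ℝ) ↦ f y)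
      fun s : Metric.sphere (0 : E) 1 ↦ G s

lemma integral_fun_norm_smul_withDensity_fun_norm (μ : Measure E) [μ.IsAddHaarMeasure]
    {φ : ℝ → NNReal} (hφ : Measurable φ) (f : ℝ → ℝ) {G : E → F}
    (hG : ∀ r : ℝ, 0 < r → ∀ x, G (r • x) = G x) :
    ∫ x, f ‖x‖ • G x ∂μ.withDensity (fun x ↦ φ ‖x‖) =
      (∫ y : Set.Ioi (0 : ℝ), φ y * f y ∂.volumeIoiPow (Module.finrank ℝ E - 1)) •
        ∫ s : Metric.sphere (0 : E) 1, G s ∂μ.toSphere := by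
  rw [integral_withDensity_eq_integral_smul (by fun_prop)]
  simpa only [NNReal.smul_def, mul_smul] using
    integral_fun_norm_smul_addHaar μ (fun y ↦ φ y * f y) hG

lemma integral_fun_norm_smul_eq_integral_smul_integral (μ : Measure E) [μ.IsAddHaarMeasure]
    {φ : ℝ → NNReal} [IsProbabilityMeasure (μ.withDensity fun x ↦ φ ‖x‖)] (hφ : Measurable φ)
    (f : ℝ → ℝ) {G : E → F} (hG : ∀ r : ℝ, 0 < r → ∀ x, G (r • x) = G x) :
    ∫ x, f ‖x‖ • G x ∂μ.withDensity (fun x ↦ φ ‖x‖) =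
      (∫ x, f ‖x‖ ∂μ.withDensity fun x ↦ φ ‖x‖) • ∫ x, G x ∂μ.withDensity fun x ↦ φ ‖x‖ := by
  have norm_part := integral_fun_norm_smul_withDensity_fun_norm μ hφ f
    (G := fun _ : E ↦ (1 : ℝ)) fun _ _ _ ↦ rfl
  have total_mass := integral_fun_norm_smul_withDensity_fun_norm μ hφ (fun _ ↦ 1)
    (G := fun _ : E ↦ (1 : ℝ)) fun _ _ _ ↦ rfl
  have direction_part := integral_fun_norm_smul_withDensity_fun_norm μ hφ (fun _ ↦ 1) hG
  simp only [smul_eq_mul, mul_one, one_smul, integral_const, probReal_univ]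
    at norm_part total_mass direction_part
  rw [integral_fun_norm_smul_withDensity_fun_norm μ hφ f hG, norm_part, direction_part, smul_smul,
    mul_right_comm, mul_assoc, ← total_mass, mul_one]

end SphericalSymmetry

section StandardGaussian

variable {E F : Type*} [NormedAddCommGroup E] [InnerProductSpace ℝ E] [FiniteDimensional ℝ E]
  [MeasurableSpace E] [BorelSpace E] [NormedAddCommGroup F] [NormedSpace ℝ F]

/-- The density of the standard Gaussian on a Euclidean space of dimension `d`, as a function of
the norm. -/
def stdGaussianRadialDensity (d : ℕ) (r : ℝ) : NNReal :=
  (((2 * Real.pi) ^ (d / 2 : ℝ))⁻¹ * Real.exp (-(1 / 2) * r ^ 2)).toNNReal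

lemma coe_stdGaussianRadialDensity (d : ℕ) (r : ℝ) :
    (stdGaussianRadialDensity d r : ℝ) =
      ((2 * Real.pi) ^ (d / 2 : ℝ))⁻¹ * Real.exp (-(1 / 2) * r ^ 2) :=
  Real.coe_toNNReal _ (by positivity)

@[fun_prop]
lemma measurable_stdGaussianRadialDensity (d : ℕ) : Measurable (stdGaussianRadialDensity d) := by
  unfold stdGaussianRadialDensity
  fun_prop

lemma integrable_exp_neg_half_mul_norm_sq :
    Integrable fun x : E ↦ Real.exp (-(1 / 2) * ‖x‖ ^ 2) := by
  refine .of_integral_ne_zero ?_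
  rw [GaussianFourier.integral_rexp_neg_mul_sq_norm (by norm_num)]
  positivity

lemma charFun_withDensity_stdGaussianRadialDensity (t : E) :
    charFun (volume.withDensity fun x : E ↦
        (stdGaussianRadialDensity (Module.finrank ℝ E) ‖x‖ : ENNReal)) t =
      Complex.exp (-‖t‖ ^ 2 / 2) := by
  have two_pi_pos : 0 < 2 * Real.pi := by positivity
  have fourier := GaussianFourier.integral_cexp_neg_mul_sq_norm_add (b := 1 / 2) (by norm_num)
    Complex.I t
  rw [charFun_apply, integral_withDensity_eq_integral_smul (by fun_prop)]
  have integrand (x : E) : stdGaussianRadialDensity (Module.finrank ℝ E) ‖x‖ •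
      Complex.exp (inner ℝ x t * Complex.I) =
      (((2 * Real.pi) ^ (Module.finrank ℝ E / 2 : ℝ))⁻¹ : ℝ) *
        Complex.exp (-(1 / 2) * ‖x‖ ^ 2 + Complex.I * inner ℝ t x) := by
    rw [NNReal.smul_def, coe_stdGaussianRadialDensity, Complex.real_smul, Complex.exp_add,
      real_inner_comm, mul_comm Complex.I]
    push_cast
    ring
  simp only [integrand]
  rw [integral_const_mul, fourier, Complex.ofReal_inv, Complex.ofReal_cpow two_pi_pos.le]
  have normalization : ((2 * Real.pi : ℝ) : ℂ) ^ (((Module.finrank ℝ E / 2 : ℝ)) : ℂ) ≠ 0 := by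
    simp [Complex.cpow_eq_zero_iff, Real.pi_ne_zero]
  have base : (Real.pi / (1 / 2) : ℂ) = ((2 * Real.pi : ℝ) : ℂ) := by push_cast; ring
  rw [base]
  push_cast at normalization ⊢
  rw [inv_mul_cancel_left₀ normalization, Complex.I_sq]
  ring_nf

lemma stdGaussian_eq_withDensity :
    stdGaussian E = volume.withDensity fun x : E ↦
      (stdGaussianRadialDensity (Module.finrank ℝ E) ‖x‖ : ENNReal) := by
  have : IsFiniteMeasure (volume.withDensity fun x : E ↦
      (stdGaussianRadialDensity (Module.finrank ℝ E) ‖x‖ : ENNReal)) :=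
    isFiniteMeasure_withDensity_ofReal (integrable_exp_neg_half_mul_norm_sq.const_mul _).2
  refine Measure.ext_of_charFun (funext fun t ↦ ?_)
  rw [charFun_stdGaussian, charFun_withDensity_stdGaussianRadialDensity]

lemma integral_pow_mul_exp_neg_half_sq_add_two (n : ℕ) :
    ∫ y in Set.Ioi (0 : ℝ), y ^ (n + 2) * Real.exp (-(1 / 2) * y ^ 2) =
      (n + 1) * ∫ y in Set.Ioi (0 : ℝ), y ^ n * Real.exp (-(1 / 2) * y ^ 2) := by
  have gamma_formula (k : ℕ) := integral_rpow_mul_exp_neg_mul_rpow (p := 2) (q := k) (b := 1 / 2)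
    (by norm_num) (by linarith [k.cast_nonneg (α := ℝ)]) (by norm_num)
  simp only [Real.rpow_natCast, Real.rpow_two] at gamma_formula
  have half_shift : (((n + 2 : ℕ) : ℝ) + 1) / 2 = ((n : ℝ) + 1) / 2 + 1 := by push_cast; ring
  rw [gamma_formula, gamma_formula, neg_div, neg_div, half_shift,
    Real.Gamma_add_one (by positivity), neg_add', Real.rpow_sub_one (by norm_num)]
  ring

variable [Nontrivial E]

lemma integral_norm_pow_stdGaussian_add_two (n : ℕ) :
    ∫ x, ‖x‖ ^ (n + 2) ∂stdGaussian E =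
      (Module.finrank ℝ E + n) * ∫ x, ‖x‖ ^ n ∂stdGaussian E := by
  obtain ⟨d, hd⟩ : ∃ d, Module.finrank ℝ E = d + 1 :=
    Nat.exists_eq_succ_of_ne_zero Module.finrank_pos.ne'
  obtain ⟨c, radial⟩ : ∃ c : ℝ, ∀ m : ℕ, ∫ x, ‖x‖ ^ m ∂stdGaussian E =
      c * ∫ y in Set.Ioi (0 : ℝ), y ^ (d + m) * Real.exp (-(1 / 2) * y ^ 2) := by
    refine ⟨(d + 1) * (volume.real (Metric.ball (0 : E) 1) *
      ((2 * Real.pi) ^ ((d + 1 : ℕ) / 2 : ℝ))⁻¹), fun m ↦ ?_⟩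
    rw [stdGaussian_eq_withDensity, integral_withDensity_eq_integral_smul (by fun_prop),
      integral_fun_norm_addHaar volume fun y ↦ stdGaussianRadialDensity _ y • y ^ m]
    simp only [hd, NNReal.smul_def, coe_stdGaussianRadialDensity, smul_eq_mul, nsmul_eq_mul,
      Nat.add_sub_cancel]
    rw [← mul_assoc, ← integral_const_mul, ← integral_const_mul]
    push_cast
    congr! 2 with y
    ring
  rw [radial, radial, ← add_assoc, integral_pow_mul_exp_neg_half_sq_add_two, hd]
  push_cast
  ring

lemma integral_norm_pow_two_mul_stdGaussian (p : ℕ) :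
    ∫ x, ‖x‖ ^ (2 * p) ∂stdGaussian E =
      ∏ k ∈ Finset.range p, ((Module.finrank ℝ E : ℝ) + 2 * k) := by
  induction p with
  | zero => simp
  | succ p ih =>
    rw [Finset.prod_range_succ, ← ih, mul_add, mul_one, integral_norm_pow_stdGaussian_add_two]
    push_cast
    ring

lemma integral_stdGaussian_of_homogeneous {n : ℕ} {P : E → F}
    (hP : ∀ t : ℝ, 0 ≤ t → ∀ x, P (t • x) = t ^ n • P x) :
    ∫ x, P x ∂stdGaussian E =
      (∫ x, ‖x‖ ^ n ∂stdGaussian E) • ∫ x, P (‖x‖⁻¹ • x) ∂stdGaussian E := by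
  have polar (x : E) : P x = ‖x‖ ^ n • P (‖x‖⁻¹ • x) := by
    rw [← hP _ (norm_nonneg x), smul_smul]
    obtain rfl | hx := eq_or_ne x 0
    · simp
    · rw [mul_inv_cancel₀ (norm_ne_zero_iff.2 hx), one_smul]
  have direction_smul (r : ℝ) (hr : 0 < r) (x : E) :
      P (‖r • x‖⁻¹ • r • x) = P (‖x‖⁻¹ • x) := by
    rw [norm_smul, Real.norm_of_nonneg hr.le, smul_smul, mul_inv_rev, mul_assoc,
      inv_mul_cancel₀ hr.ne', mul_one]
  have : IsProbabilityMeasure (volume.withDensity fun x : E ↦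
      (stdGaussianRadialDensity (Module.finrank ℝ E) ‖x‖ : ENNReal)) :=
    stdGaussian_eq_withDensity (E := E) ▸ inferInstance
  rw [integral_congr_ae (.of_forall polar), stdGaussian_eq_withDensity]
  exact integral_fun_norm_smul_eq_integral_smul_integral volume
    (measurable_stdGaussianRadialDensity _) (· ^ n) direction_smul

theorem integral_stdGaussian_sqrt_finrank_div_norm_smul {p : ℕ} {P : E → F}
    (hP : ∀ t : ℝ, 0 ≤ t → ∀ x, P (t • x) = t ^ (2 * p) • P x) :
    ∫ x, P ((√(Module.finrank ℝ E) / ‖x‖) • x) ∂stdGaussian E =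
      (∏ k ∈ Finset.range p, (Module.finrank ℝ E : ℝ) / (Module.finrank ℝ E + 2 * k)) •
        ∫ x, P x ∂stdGaussian E := by
  have rescale (x : E) : P ((√(Module.finrank ℝ E) / ‖x‖) • x) =
      (Module.finrank ℝ E : ℝ) ^ p • P (‖x‖⁻¹ • x) := by
    rw [div_eq_mul_inv, ← smul_smul, hP _ (Real.sqrt_nonneg _), pow_mul,
      Real.sq_sqrt (Nat.cast_nonneg _)]
  have finrank_pos : (0 : ℝ) < Module.finrank ℝ E := mod_cast Module.finrank_pos
  have moment_ne_zero : ∏ k ∈ Finset.range p, ((Module.finrank ℝ E : ℝ) + 2 * k) ≠ 0 :=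
    Finset.prod_ne_zero_iff.2 fun k _ ↦ by positivity
  simp only [rescale]
  rw [integral_smul, integral_stdGaussian_of_homogeneous hP, integral_norm_pow_two_mul_stdGaussian,
    smul_smul, Finset.prod_div_distrib, div_mul_cancel₀ _ moment_ne_zero, Finset.prod_const,
    Finset.card_range]

end StandardGaussian

lemma monomial_real_smul {ι : Type*} (s : Finset ι) (n : ℕ) (q q' : ι → ℕ) (t : ℝ) (w : ℂ)
    (z : ι → ℂ) :
    (t • w) ^ n * ∏ j ∈ s, (t • z j) ^ q j * (starRingEnd ℂ) (t • z j) ^ q' j =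
      t ^ (n + ∑ j ∈ s, (q j + q' j)) •
        (w ^ n * ∏ j ∈ s, z j ^ q j * (starRingEnd ℂ) (z j) ^ q' j) := by
  simp only [Complex.real_smul, map_mul, Complex.conj_ofReal, mul_pow, Finset.prod_mul_distrib,
    pow_add, Complex.ofReal_mul, Complex.ofReal_pow, Complex.ofReal_prod,
    ← Finset.prod_pow_eq_pow_sum]
  ring

section Modes

variable {l : ℕ}

/-- The reflection `m ↦ -m` of the range `-l, ..., l`. -/
def mrangeNeg (l : ℕ) : mrange l ≃ mrange l :=
  (Equiv.neg ℤ).subtypeEquiv fun m ↦ by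
    simp only [mrange, Finset.mem_Icc, Equiv.neg_apply]
    omega

@[simp]
lemma coe_mrangeNeg (m : mrange l) : (mrangeNeg l m : ℤ) = -m := rfl

@[simp]
lemma mrangeNeg_mrangeNeg (m : mrange l) : mrangeNeg l (mrangeNeg l m) = m :=
  Subtype.ext (neg_neg _)

lemma natCast_mem_mrange {j : ℕ} (hj : j ≤ l) : (j : ℤ) ∈ mrange l := by
  simp only [mrange, Finset.mem_Icc]
  omega

instance : Nonempty (mrange l) := ⟨0, natCast_mem_mrange l.zero_le⟩

lemma card_mrange (l : ℕ) : (mrange l).card = 2 * l + 1 := by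
  simp only [mrange, Int.card_Icc]
  omega

/-- The independent Gaussian coordinate attached to a projection quantum number `m`: the real part
of `a_{lm}` if `0 ≤ m`, the imaginary part of `a_{l,-m}` if `m < 0`. -/
def modeIx (hl : 1 ≤ l) (m : mrange l) : GaussIx :=
  ⟨(l, (m : ℤ).natAbs, decide ((m : ℤ) < 0)), hl, by
    have := m.2
    simp only [mrange, Finset.mem_Icc] at this
    dsimp only
    omega, by simp +contextual⟩

lemma modeIx_injective (hl : 1 ≤ l) : Function.Injective (modeIx hl) := by
  intro m m' h
  have h := congrArg Subtype.val h
  simp only [modeIx, Prod.mk.injEq, decide_eq_decide, true_and] at h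
  exact Subtype.ext (by omega)

lemma gfun_eq_prod_range (l p : ℕ) :
    gfun l p = ∏ k ∈ Finset.range p, (2 * (l : ℝ) + 1) / (2 * l + 1 + 2 * k) := by
  rw [gfun, ← Finset.Ico_succ_right_eq_Icc, Finset.prod_Ico_eq_prod_range]
  refine Finset.prod_congr rfl fun k _ ↦ ?_
  push_cast
  ring_nf

end Modes

/-- The standardized real coordinates of the coefficients at multipole `l`, indexed as in
`modeIx`. -/
def stdVector {Ω : Type*} (C : ℕ → ℝ) (a : ℕ → ℤ → Ω → ℂ) {l : ℕ} (hl : 1 ≤ l) (ω : Ω) :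
    EuclideanSpace ℝ (mrange l) :=
  WithLp.toLp 2 fun m ↦ coordFn a (modeIx hl m) ω / √(coordVar C (modeIx hl m))

namespace CMBModel

variable {Ω : Type*} [MeasurableSpace Ω] {μ : Measure Ω} {C : ℕ → ℝ} {a : ℕ → ℤ → Ω → ℂ}

lemma coordVar_pos (hmod : CMBModel μ C a) (i : GaussIx) : 0 < coordVar C i := by
  have := hmod.cPos i.1.1 i.2.1
  unfold coordVar
  split_ifs <;> simpa

lemma aemeasurable_coordFn (hmod : CMBModel μ C a) (i : GaussIx) :
    AEMeasurable (coordFn a i) μ := by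
  have : NeZero (μ.map (coordFn a i)) := hmod.gauss i ▸ inferInstance
  exact aemeasurable_of_map_neZero this

lemma hasLaw_coordFn_div_sqrt (hmod : CMBModel μ C a) (i : GaussIx) :
    HasLaw (fun ω ↦ coordFn a i ω / √(coordVar C i)) (gaussianReal 0 1) μ := by
  have coord_law : HasLaw (coordFn a i) (gaussianReal 0 (coordVar C i)) μ :=
    ⟨hmod.aemeasurable_coordFn i, hmod.gauss i⟩
  convert gaussianReal_div_const coord_law (√(coordVar C i)) using 2
  · rw [zero_div]
  · ext
    have := (hmod.coordVar_pos i).ne'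
    simp [this]

variable {l : ℕ} (hl : 1 ≤ l)

lemma hasLaw_stdVector (hmod : CMBModel μ C a) :
    HasLaw (stdVector C a hl) (stdGaussian (EuclideanSpace ℝ (mrange l))) μ := by
  have coord_law (m : mrange l) := hmod.hasLaw_coordFn_div_sqrt (modeIx hl m)
  have indep : iIndepFun
      (fun m ω ↦ coordFn a (modeIx hl m) ω / √(coordVar C (modeIx hl m))) μ :=
    (hmod.indep.precomp (modeIx_injective hl)).comp
      (fun m x ↦ x / √(coordVar C (modeIx hl m))) fun m ↦ by fun_prop
  have joint_law : HasLaw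
      (fun ω m ↦ coordFn a (modeIx hl m) ω / √(coordVar C (modeIx hl m)))
      (Measure.pi fun _ ↦ gaussianReal 0 1) μ :=
    ⟨aemeasurable_pi_lambda _ fun m ↦ (coord_law m).aemeasurable, by
      simp only [indep.map_fun_eq_pi_map fun m ↦ (coord_law m).aemeasurable,
        fun m ↦ (coord_law m).map_eq]⟩
  exact HasLaw.comp ⟨by fun_prop, map_pi_eq_stdGaussian⟩ joint_law

lemma ufun_zero (hmod : CMBModel μ C a) (ω : Ω) :
    ufun C a l 0 ω = stdVector C a hl ω ⟨0, natCast_mem_mrange l.zero_le⟩ := by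
  have hC := hmod.cPos l hl
  have real : a l 0 ω = (a l 0 ω).re :=
    Complex.ext rfl (by simpa using hmod.aZeroReal l hl ω)
  rw [ufun, real]
  simp [stdVector, coordFn, coordVar, modeIx, hC.le]

lemma ufun_of_pos (hmod : CMBModel μ C a) (ω : Ω) (m : mrange l) (hm : 0 < (m : ℤ)) :
    ufun C a l m ω =
      (stdVector C a hl ω m + stdVector C a hl ω (mrangeNeg l m) * Complex.I) / √2 := by
  have hC : 0 ≤ C l / 2 := (half_pos (hmod.cPos l hl)).le
  have re_coord : stdVector C a hl ω m = (a l m ω).re / (√(C l) / √2) := by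
    simp [stdVector, coordFn, coordVar, modeIx, hC, hm.ne', hm.le.not_gt, abs_of_pos hm]
  have im_coord : stdVector C a hl ω (mrangeNeg l m) = (a l m ω).im / (√(C l) / √2) := by
    simp [stdVector, coordFn, coordVar, modeIx, hC, hm, hm.ne', abs_of_pos hm]
  rw [re_coord, im_coord, ufun]
  push_cast
  field_simp
  rw [Complex.re_add_im]

lemma normSq_ufun_neg (hmod : CMBModel μ C a) {j : ℕ} (hj₁ : 1 ≤ j) (hj : j ≤ l) (ω : Ω) :
    Complex.normSq (ufun C a l (-j) ω) = Complex.normSq (ufun C a l j ω) := by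
  simp only [ufun, hmod.aConj l (hj₁.trans hj) j hj₁ hj, map_div₀, map_mul, map_pow,
    Complex.normSq_neg, Complex.normSq_one, one_pow, one_mul, Complex.normSq_conj]

lemma normSq_ufun (hmod : CMBModel μ C a) (ω : Ω) (m : mrange l) :
    Complex.normSq (ufun C a l m ω) =
      (stdVector C a hl ω m ^ 2 + stdVector C a hl ω (mrangeNeg l m) ^ 2) / 2 := by
  have of_pos (m : mrange l) (hm : 0 < (m : ℤ)) : Complex.normSq (ufun C a l m ω) =
      (stdVector C a hl ω m ^ 2 + stdVector C a hl ω (mrangeNeg l m) ^ 2) / 2 := by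
    rw [hmod.ufun_of_pos hl ω m hm, map_div₀, Complex.normSq_add_mul_I, Complex.normSq_ofReal,
      Real.mul_self_sqrt zero_le_two]
  obtain hm | hm | hm := lt_trichotomy (m : ℤ) 0
  · obtain ⟨j, hj⟩ : ∃ j : ℕ, (m : ℤ) = -j := ⟨(m : ℤ).natAbs, by omega⟩
    have hj_le : j ≤ l := by
      have := m.2
      simp only [mrange, Finset.mem_Icc] at this
      omega
    have reflected := of_pos (mrangeNeg l m) (by simpa using hm)
    rwa [coe_mrangeNeg, hj, neg_neg, ← hmod.normSq_ufun_neg (by omega) hj_le, ← hj,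
      mrangeNeg_mrangeNeg, add_comm] at reflected
  · obtain rfl : m = ⟨0, natCast_mem_mrange l.zero_le⟩ := Subtype.ext hm
    rw [hmod.ufun_zero hl, Complex.normSq_ofReal, ← sq]
    exact (add_self_div_two _).symm
  · exact of_pos m hm

lemma Chat_eq (hmod : CMBModel μ C a) (ω : Ω) :
    Chat a l ω = C l * (‖stdVector C a hl ω‖ ^ 2 / (2 * l + 1)) := by
  have normSq_eq (m : ℤ) : Complex.normSq (a l m ω) =
      C l * Complex.normSq (ufun C a l m ω) := by
    have hC := hmod.cPos l hl
    rw [ufun, map_div₀, Complex.normSq_ofReal, Real.mul_self_sqrt hC.le,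
      mul_div_cancel₀ _ hC.ne']
  have sum_reflect := Equiv.sum_comp (mrangeNeg l) fun m ↦ stdVector C a hl ω m ^ 2
  rw [Chat, ← Finset.sum_coe_sort, EuclideanSpace.real_norm_sq_eq]
  simp only [normSq_eq, hmod.normSq_ufun hl, ← Finset.mul_sum, ← Finset.sum_div,
    Finset.sum_add_distrib, sum_reflect]
  ring

lemma uhat_eq_smul_ufun (hmod : CMBModel μ C a) (m : ℤ) (ω : Ω) :
    uhat a l m ω = (√(2 * l + 1) / ‖stdVector C a hl ω‖) • ufun C a l m ω := by
  rw [uhat, ufun, hmod.Chat_eq hl, Real.sqrt_mul (hmod.cPos l hl).le, Real.sqrt_div (sq_nonneg _),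
    Real.sqrt_sq (norm_nonneg _), Complex.real_smul]
  push_cast
  field_simp

lemma exists_clm_ufun_eq (hmod : CMBModel μ C a) {j : ℕ} (hj : j ≤ l) :
    ∃ L : EuclideanSpace ℝ (mrange l) →L[ℝ] ℂ, ∀ ω, ufun C a l j ω = L (stdVector C a hl ω) := by
  let coord (m : mrange l) : EuclideanSpace ℝ (mrange l) →L[ℝ] ℂ :=
    Complex.ofRealCLM ∘L EuclideanSpace.proj m
  obtain rfl | hj₀ := j.eq_zero_or_pos
  · exact ⟨coord ⟨0, natCast_mem_mrange hj⟩, hmod.ufun_zero hl⟩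
  · let m : mrange l := ⟨j, natCast_mem_mrange hj⟩
    refine ⟨(√2)⁻¹ • (coord m + Complex.I • coord (mrangeNeg l m)), fun ω ↦ ?_⟩
    rw [hmod.ufun_of_pos hl ω m (Int.natCast_pos.2 hj₀)]
    simp [coord, div_eq_inv_mul, mul_add, mul_comm Complex.I]

theorem integral_sqrt_div_norm_smul_stdVector (hmod : CMBModel μ C a) {F : Type*}
    [NormedAddCommGroup F] [NormedSpace ℝ F] {p : ℕ} {P : EuclideanSpace ℝ (mrange l) → F}
    (hP : ∀ t : ℝ, 0 ≤ t → ∀ x, P (t • x) = t ^ (2 * p) • P x) (hP_cont : Continuous P) :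
    ∫ ω, P ((√(2 * l + 1) / ‖stdVector C a hl ω‖) • stdVector C a hl ω) ∂μ =
      gfun l p • ∫ ω, P (stdVector C a hl ω) ∂μ := by
  have law := hmod.hasLaw_stdVector hl
  have finrank_eq : (Module.finrank ℝ (EuclideanSpace ℝ (mrange l)) : ℝ) = 2 * l + 1 := by
    rw [finrank_euclideanSpace, Fintype.card_coe, card_mrange]
    push_cast
    rfl
  have normalized := law.integral_comp
    (f := fun x ↦ P ((√(2 * l + 1) / ‖x‖) • x))
    (hP_cont.comp_aestronglyMeasurable (Measurable.aestronglyMeasurable (by fun_prop)))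
  have plain := law.integral_comp hP_cont.aestronglyMeasurable
  have gaussian := integral_stdGaussian_sqrt_finrank_div_norm_smul hP
  rw [finrank_eq, ← gfun_eq_prod_range] at gaussian
  exact normalized.trans (gaussian.trans (congrArg _ plain.symm))

end CMBModel

/-- **Lemma 3.3** (moments with estimated normalization at a single multipole). For a single
multipole `l` and exponents `q₀, q₁, q₁', …, q_k, q_k'` with even total degree `n`,
`E[û_{l0}^{q₀} ∏_j û_{lj}^{q_j} (û_{lj}^*)^{q_j'}] = g(l; n/2) ·
E[u_{l0}^{q₀} ∏_j u_{lj}^{q_j} (u_{lj}^*)^{q_j'}]`. -/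
theorem lemma_3_3 (Ω : Type) (_ : MeasurableSpace Ω) (μ : Measure Ω)
    [IsProbabilityMeasure μ] (C : ℕ → ℝ) (a : ℕ → ℤ → Ω → ℂ) (hmod : CMBModel μ C a)
    (l k : ℕ) (hl : 1 ≤ l) (hk : k ≤ l) (q₀ : ℕ) (q q' : ℕ → ℕ)
    (heven : Even (q₀ + ∑ j ∈ Finset.Icc 1 k, (q j + q' j))) :
    (∫ ω, (uhat a l 0 ω) ^ q₀ *
        ∏ j ∈ Finset.Icc 1 k,
          (uhat a l (j : ℤ) ω) ^ (q j) * ((starRingEnd ℂ) (uhat a l (j : ℤ) ω)) ^ (q' j) ∂μ) =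
      ((gfun l ((q₀ + ∑ j ∈ Finset.Icc 1 k, (q j + q' j)) / 2) : ℝ) : ℂ) *
        ∫ ω, (ufun C a l 0 ω) ^ q₀ *
          ∏ j ∈ Finset.Icc 1 k,
            (ufun C a l (j : ℤ) ω) ^ (q j) *
              ((starRingEnd ℂ) (ufun C a l (j : ℤ) ω)) ^ (q' j) ∂μ := by
  obtain ⟨p, hp⟩ := heven.two_dvd
  choose! L hL using fun j (hj : j ≤ l) ↦ hmod.exists_clm_ufun_eq hl hj
  let P (x : EuclideanSpace ℝ (mrange l)) : ℂ :=
    L 0 x ^ q₀ * ∏ j ∈ Finset.Icc 1 k, L j x ^ q j * (starRingEnd ℂ) (L j x) ^ q' j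
  have P_continuous : Continuous P := by fun_prop
  have P_homogeneous (t : ℝ) (x) : P (t • x) = t ^ (2 * p) • P x := by
    simp only [P, map_smul, monomial_real_smul, hp]
  have ufun_monomial (ω : Ω) : ufun C a l 0 ω ^ q₀ * ∏ j ∈ Finset.Icc 1 k,
      ufun C a l j ω ^ q j * (starRingEnd ℂ) (ufun C a l j ω) ^ q' j = P (stdVector C a hl ω) :=
    congrArg₂ _ (congrArg (· ^ q₀) (hL 0 l.zero_le ω)) <| Finset.prod_congr rfl fun j hj ↦ by
      rw [hL j ((Finset.mem_Icc.1 hj).2.trans hk)]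
  simp only [hmod.uhat_eq_smul_ufun hl, monomial_real_smul, ufun_monomial, hp, ← P_homogeneous]
  rw [Nat.mul_div_cancel_left p two_pos, ← Complex.real_smul]
  exact hmod.integral_sqrt_div_norm_smul_stdVector hl (fun t _ ↦ P_homogeneous t) P_continuous

end
end
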